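/- arXiv:1811.09274 — 3 statements merged into one kernel-verified Lean document; each statement's English description precedes it below -/
import Mathlib

section
/- Let M be a Maya diagram and k ≥ 1 an integer, and let p denote the cardinality of the (finite) symmetric difference M Δ (M + k). Then p ≥ k and p ≡ k (mod 2). In particular, a p-cyclic Maya diagram can only have positive shifts k of the same parity as p with k ≤ p. -/
/-- A Maya diagram: a set of integers containing finitely many nonnegative
integers and excluding finitely many negative integers. -/
def IsMaya (M : Set ℤ) : Prop :=
  {m : ℤ | m ∈ M ∧ 0 ≤ m}.Finite ∧ {m : ℤ | m < 0 ∧ m ∉ M}.Finite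

/-- The translate `M + k = {m + k : m ∈ M}`. -/
def shiftSet (M : Set ℤ) (k : ℤ) : Set ℤ := (fun m => m + k) '' M

/-- if `M` is a Maya diagram, `k ≥ 1`, and
`p = #(M ∆ (M+k))`, then `p ≥ k` and `p ≡ k (mod 2)`. -/
theorem cyclic_shift_bound_and_parity (M : Set ℤ) (hM : IsMaya M) (k : ℤ) (hk : 1 ≤ k)
    (p : ℕ) (hp : p = (symmDiff M (shiftSet M k)).ncard) :
    k ≤ (p : ℤ) ∧ (p : ℤ) % 2 = k % 2 := by
  classical
  obtain ⟨h1, h2⟩ := hM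
  obtain ⟨u, hu⟩ := h1.bddAbove
  obtain ⟨l, hl⟩ := h2.bddBelow
  have hu' : ∀ m ∈ M, m < max 0 u + 1 := by
    intro m hm
    by_cases h0 : 0 ≤ m
    · have := hu ⟨hm, h0⟩
      omega
    · omega
  have hl' : ∀ m, m < min 0 l → m ∈ M := by
    intro m hm
    by_contra h
    have := hl ⟨by omega, h⟩
    omega
  generalize max 0 u + 1 = U at hu'
  generalize min 0 l = L at hl'
  let A : Finset ℤ := (Finset.Ico L U).filter (fun m => m ∈ M)
  let C : Finset ℤ := A ∪ Finset.Ico (L - k) L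
  let B : Finset ℤ := C.map (addRightEmbedding k)
  have hA : ∀ m, m ∈ A ↔ (L ≤ m ∧ m ∈ M) := by
    intro m
    simp only [A, Finset.mem_filter, Finset.mem_Ico]
    constructor
    · rintro ⟨⟨a, b⟩, c⟩; exact ⟨a, c⟩
    · rintro ⟨a, c⟩; exact ⟨⟨a, hu' m c⟩, c⟩
  have hC : ∀ m, m ∈ C ↔ (L - k ≤ m ∧ m ∈ M) := by
    intro m
    simp only [C, Finset.mem_union, hA, Finset.mem_Ico]
    constructor
    · rintro (⟨a, c⟩ | ⟨a, b⟩)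
      · exact ⟨by omega, c⟩
      · exact ⟨a, hl' m b⟩
    · rintro ⟨a, c⟩
      by_cases h : L ≤ m
      · exact Or.inl ⟨h, c⟩
      · exact Or.inr ⟨a, by omega⟩
  have hS : ∀ m, m ∈ shiftSet M k ↔ m - k ∈ M := by
    intro m
    constructor
    · rintro ⟨x, hx, rfl⟩; simpa using hx
    · intro h; exact ⟨m - k, h, by simp⟩
  have hB : ∀ m, m ∈ B ↔ (L ≤ m ∧ m - k ∈ M) := by
    intro m
    simp only [B, Finset.mem_map, addRightEmbedding_apply, hC]
    constructor
    · rintro ⟨x, ⟨a, b⟩, rfl⟩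
      exact ⟨by omega, by simpa using b⟩
    · rintro ⟨a, b⟩; exact ⟨m - k, ⟨by omega, b⟩, by simp⟩
  have hBc : (B.card : ℤ) = A.card + k := by
    have hd : Disjoint A (Finset.Ico (L - k) L) := by
      rw [Finset.disjoint_left]
      intro m hm hm'
      rw [hA] at hm
      rw [Finset.mem_Ico] at hm'
      omega
    simp only [B, C, Finset.card_map, Finset.card_union_of_disjoint hd, Int.card_Ico]
    push_cast
    omega
  have hs : symmDiff M (shiftSet M k) = (((A \ B) ∪ (B \ A) : Finset ℤ) : Set ℤ) := by
    ext m
    have e1 := hl' m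
    have e2 := hl' (m - k)
    simp only [Set.mem_symmDiff, hS, Finset.mem_coe, Finset.mem_union, Finset.mem_sdiff, hA, hB]
    by_cases h : L ≤ m
    · simp [h]
    · have a1 := e1 (by omega)
      have a2 := e2 (by omega)
      simp [h, a1, a2]
  rw [hs, Set.ncard_coe_finset, Finset.card_union_of_disjoint disjoint_sdiff_sdiff] at hp
  have c1 := Finset.card_sdiff_add_card_inter A B
  have c2 := Finset.card_sdiff_add_card_inter B A
  rw [Finset.inter_comm] at c2
  omega
end

section
/- Let p and k be positive integers with k ≤ p and p ≡ k (mod 2). Then there exists a Maya diagram M such that the symmetric difference M Δ (M + k) has cardinality exactly p; i.e., for every fixed period p there exist p-cyclic Maya diagrams with every shift k = p, p−2, p−4, … down to 2 or 1. -/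
/-- for every `p ≥ k ≥ 1` with `p ≡ k (mod 2)` there exists a
`p`-cyclic Maya diagram with shift `k`, i.e. `M` with `#(M ∆ (M+k)) = p`. -/
theorem exists_cyclic_maya_of_shift (p k : ℕ) (hk : 1 ≤ k) (hkp : k ≤ p)
    (hpar : p % 2 = k % 2) :
    ∃ M : Set ℤ, IsMaya M ∧ (symmDiff M (shiftSet M (k : ℤ))).ncard = p := by
  obtain ⟨j, rfl⟩ : ∃ j, p = k + 2 * j := ⟨(p - k) / 2, by omega⟩
  have hk0 : (0 : ℤ) < k := by exact_mod_cast hk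
  have hinj : ∀ a b : ℤ, (k : ℤ) * a = k * b → a = b := fun a b h =>
    mul_left_cancel₀ hk0.ne' h
  have hge : ∀ i : ℕ, (k : ℤ) ≤ k * ((i : ℤ) + 1) := fun i => by
    nlinarith [mul_nonneg hk0.le (Int.natCast_nonneg i)]
  let F : Finset ℤ := (Finset.range j).image (fun i : ℕ => (k : ℤ) * (((2 * i : ℕ) : ℤ) + 1))
  let G : Finset ℤ := (Finset.range (2 * j)).image (fun i : ℕ => (k : ℤ) * ((i : ℤ) + 1))
  have hF : ∀ x, x ∈ F ↔ ∃ i : ℕ, i < j ∧ (k : ℤ) * (((2 * i : ℕ) : ℤ) + 1) = x := fun x => by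
    simp only [F, Finset.mem_image, Finset.mem_range]
  have hG : ∀ x, x ∈ G ↔ ∃ i : ℕ, i < 2 * j ∧ (k : ℤ) * ((i : ℤ) + 1) = x := fun x => by
    simp only [G, Finset.mem_image, Finset.mem_range]
  let M : Set ℤ := {x | x < 0 ∨ x ∈ F}
  have hM : ∀ x, x ∈ M ↔ x < 0 ∨ x ∈ F := fun x => Iff.rfl
  refine ⟨M, ⟨F.finite_toSet.subset ?_, Set.finite_empty.subset ?_⟩, ?_⟩
  · rintro x ⟨h1 | h1, h2⟩
    · omega
    · exact h1
  · rintro x ⟨h1, h2⟩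
    exact h2 (Or.inl h1)
  have hS : ∀ x, x ∈ shiftSet M (k : ℤ) ↔
      x < k ∨ ∃ i : ℕ, i < j ∧ (k : ℤ) * (((2 * i + 1 : ℕ) : ℤ) + 1) = x := by
    intro x
    have h0 : x ∈ shiftSet M (k : ℤ) ↔ x - k ∈ M := by
      constructor
      · rintro ⟨y, hy, rfl⟩
        simpa using hy
      · intro h
        exact ⟨x - k, h, by simp⟩
    rw [h0, hM, hF]
    refine or_congr (by omega) (exists_congr fun i => and_congr_right fun _ => ?_)
    push_cast
    constructor <;> intro h <;> linarith
  have key : symmDiff M (shiftSet M (k : ℤ)) = ((Finset.Ico (0 : ℤ) k ∪ G : Finset ℤ) : Set ℤ) := by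
    ext x
    rw [Set.mem_symmDiff, hS, hM, hF, Finset.mem_coe, Finset.mem_union, Finset.mem_Ico, hG]
    constructor
    · rintro (⟨h1 | ⟨i, hi, rfl⟩, h2⟩ | ⟨h1 | ⟨i, hi, rfl⟩, h2⟩)
      · exact absurd (Or.inl (by omega)) h2
      · exact Or.inr ⟨2 * i, by omega, rfl⟩
      · exact Or.inl ⟨not_lt.1 fun h => h2 (Or.inl h), h1⟩
      · exact Or.inr ⟨2 * i + 1, by omega, rfl⟩
    · rintro (⟨h1, h2⟩ | ⟨i, hi, rfl⟩)
      · right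
        refine ⟨Or.inl h2, ?_⟩
        rintro (h | ⟨i, hi, rfl⟩)
        · omega
        · exact absurd h2 (not_lt.2 (hge _))
      · have := hge i
        rcases Nat.even_or_odd' i with ⟨c, rfl | rfl⟩
        · left
          refine ⟨Or.inr ⟨c, by omega, rfl⟩, ?_⟩
          rintro (h | ⟨d, hd, h⟩)
          · exact absurd h (not_lt.2 this)
          · have := hinj _ _ h
            omega
        · right
          refine ⟨Or.inr ⟨c, by omega, rfl⟩, ?_⟩
          rintro (h | ⟨d, hd, h⟩)
          · exact absurd h (not_lt.2 (hk0.le.trans this))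
          · have := hinj _ _ h
            omega
  rw [key, Set.ncard_coe_finset, Finset.card_union_of_disjoint, Int.card_Ico,
    Finset.card_image_of_injective]
  · simp
  · intro a b h
    have := hinj _ _ h
    omega
  · rw [Finset.disjoint_left]
    intro x hx hx'
    obtain ⟨i, _, rfl⟩ := (hG x).1 hx'
    exact absurd (Finset.mem_Ico.1 hx).2 (not_lt.2 (hge i))
end

section
/- Let M be a Maya diagram and k ≥ 1 an integer such that the symmetric difference M Δ (M + k) has cardinality 5 (i.e., M is a non-degenerate 5-cyclic Maya diagram with shift k). Then k ∈ {1, 3, 5}; these are the only possible positive shifts for 5-cyclic Maya diagrams, corresponding to the signature classes (5), (3,1,1), (1,3,1), (1,1,3) and (1,1,1,1,1) of the A_4-Painlevé system. -/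
open Classical in
/-- The number of switches of a truth-valued sequence has the parity given by the end points. -/
theorem switch_parity (a : ℕ → Prop) (n : ℕ) :
    Odd ((Finset.range n).filter (fun i => ¬ (a i ↔ a (i + 1)))).card ↔ ¬ (a 0 ↔ a n) := by
  induction n with
  | zero => simp
  | succ n ih =>
    rw [Finset.range_add_one, Finset.filter_insert]
    split_ifs with h
    · rw [ih]
      tauto
    · rw [Finset.card_insert_of_notMem (by simp), Nat.odd_add_one, ih]
      tauto

theorem mem_shiftSet_iff (M : Set ℤ) (k x : ℤ) : x ∈ shiftSet M k ↔ x - k ∈ M := by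
  unfold shiftSet
  constructor
  · rintro ⟨m, hm, rfl⟩
    simpa using hm
  · intro h
    exact ⟨x - k, h, by simp⟩

theorem mem_diff_iff (M : Set ℤ) (k x : ℤ) :
    x ∈ symmDiff M (shiftSet M k) ↔ ¬ (x - k ∈ M ↔ x ∈ M) := by
  rw [Set.mem_symmDiff, mem_shiftSet_iff]
  tauto

theorem maya_bound (M : Set ℤ) (hM : IsMaya M) :
    ∃ B : ℕ, (∀ x : ℤ, (B : ℤ) ≤ x → x ∉ M) ∧ (∀ x : ℤ, x < -(B : ℤ) → x ∈ M) := by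
  obtain ⟨h1, h2⟩ := hM
  obtain ⟨b, hb⟩ := h1.bddAbove
  obtain ⟨c, hc⟩ := h2.bddBelow
  refine ⟨b.natAbs + c.natAbs + 1, ?_, ?_⟩
  · intro x hx hxM
    have := hb (show x ∈ {m : ℤ | m ∈ M ∧ 0 ≤ m} from ⟨hxM, by omega⟩)
    omega
  · intro x hx
    by_contra hxM
    have := hc (show x ∈ {m : ℤ | m < 0 ∧ m ∉ M} from ⟨by omega, hxM⟩)
    omega

open Classical in
theorem fiber_odd (M : Set ℤ) (hM : IsMaya M) (k : ℤ) (hk : 1 ≤ k) (D : Finset ℤ)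
    (hD : ∀ x, x ∈ D ↔ ¬ (x - k ∈ M ↔ x ∈ M)) (r : ℤ) (hr0 : 0 ≤ r) (hrk : r < k) :
    Odd (D.filter (fun x => x % k = r)).card := by
  obtain ⟨B, hB1, hB2⟩ := maya_bound M hM
  set N : ℕ := B + 2 with hN
  have hhi : ∀ q : ℤ, (N : ℤ) ≤ q → r + k * q ∉ M := by
    intro q hq
    apply hB1
    have : (B : ℤ) + 2 ≤ q := by omega
    nlinarith
  have hlo : ∀ q : ℤ, q ≤ -(N : ℤ) → r + k * q ∈ M := by
    intro q hq
    apply hB2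
    have : q ≤ -((B : ℤ) + 2) := by omega
    nlinarith
  let a : ℕ → Prop := fun i => r + k * ((i : ℤ) - N) ∈ M
  have hodd := (switch_parity a (2 * N)).2 (by
    have h0 : a 0 := hlo _ (by simp)
    have h1 : ¬ a (2 * N) := hhi _ (by push_cast; omega)
    tauto)
  have himg : D.filter (fun x => x % k = r) =
      ((Finset.range (2 * N)).filter (fun i => ¬ (a i ↔ a (i + 1)))).image
        (fun i : ℕ => r + k * ((i : ℤ) + 1 - N)) := by
    ext x
    simp only [Finset.mem_filter, Finset.mem_image, Finset.mem_range, hD]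
    constructor
    · rintro ⟨hx, hxr⟩
      have hdiv : x = r + k * (x / k) := by
        have := Int.emod_add_mul_ediv x k
        rw [hxr] at this
        exact this.symm
      generalize x / k = q at hdiv
      have hsub : x - k = r + k * (q - 1) := by rw [hdiv]; ring
      have hq1 : q ≤ N := by
        by_contra hcon
        apply hx
        rw [hsub, hdiv]
        exact iff_of_false (hhi _ (by omega)) (hhi _ (by omega))
      have hq2 : -(N : ℤ) < q := by
        by_contra hcon
        apply hx
        rw [hsub, hdiv]
        exact iff_of_true (hlo _ (by omega)) (hlo _ (by omega))
      have hi : (((q + N - 1).toNat : ℕ) : ℤ) = q + N - 1 := Int.toNat_of_nonneg (by omega)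
      refine ⟨(q + N - 1).toNat, ⟨by omega, ?_⟩, ?_⟩
      · simp only [a]
        push_cast
        rw [hi, show q + (N : ℤ) - 1 - N = q - 1 by ring,
          show q + (N : ℤ) - 1 + 1 - N = q by ring, ← hsub, ← hdiv]
        exact hx
      · rw [hi, hdiv]; ring
    · rintro ⟨i, ⟨hi, hai⟩, rfl⟩
      refine ⟨?_, ?_⟩
      · simp only [a] at hai
        push_cast at hai
        rw [show r + k * ((i : ℤ) + 1 - N) - k = r + k * ((i : ℤ) - N) by ring]
        exact hai
      · rw [Int.add_mul_emod_self_left]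
        exact Int.emod_eq_of_lt hr0 hrk
  rw [himg, Finset.card_image_of_injective]
  · exact hodd
  · intro i j hij
    have h := mul_left_cancel₀ (by omega : k ≠ 0) (add_left_cancel hij)
    omega

/-- a non-degenerate `5`-cyclic Maya diagram (`#(M ∆ (M+k)) = 5`)
with positive shift `k ≥ 1` must have `k ∈ {1, 3, 5}`. -/
theorem five_cyclic_shifts (M : Set ℤ) (hM : IsMaya M) (k : ℤ) (hk : 1 ≤ k)
    (h5 : (symmDiff M (shiftSet M k)).ncard = 5) :
    k = 1 ∨ k = 3 ∨ k = 5 := by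
  classical
  have hfin : (symmDiff M (shiftSet M k)).Finite := Set.finite_of_ncard_pos (by omega)
  set D : Finset ℤ := hfin.toFinset with hDdef
  have hcard : D.card = 5 := by rw [← h5, Set.ncard_eq_toFinset_card _ hfin]
  have hD : ∀ x, x ∈ D ↔ ¬ (x - k ∈ M ↔ x ∈ M) := by
    intro x
    rw [hDdef, Set.Finite.mem_toFinset, mem_diff_iff]
  have hodd : ∀ r ∈ Finset.Ico (0 : ℤ) k, Odd (D.filter (fun x => x % k = r)).card := by
    intro r hr
    rw [Finset.mem_Ico] at hr
    exact fiber_odd M hM k hk D hD r hr.1 hr.2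
  have hsum : D.card = ∑ r ∈ Finset.Ico (0 : ℤ) k, (D.filter (fun x => x % k = r)).card := by
    apply Finset.card_eq_sum_card_fiberwise
    intro x _
    simp only [Finset.coe_Ico, Set.mem_Ico]
    exact ⟨Int.emod_nonneg _ (by omega), Int.emod_lt_of_pos _ (by omega)⟩
  have hle : (Finset.Ico (0 : ℤ) k).card ≤ 5 := by
    rw [← hcard, hsum, Finset.card_eq_sum_ones]
    exact Finset.sum_le_sum (fun r hr => (hodd r hr).pos)
  have hpar : Odd (Finset.Ico (0 : ℤ) k).card := by
    have h := Finset.odd_sum_iff_odd_card_odd (s := Finset.Ico (0 : ℤ) k)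
      (fun r => (D.filter (fun x => x % k = r)).card)
    rw [Finset.filter_true_of_mem hodd, ← hsum, hcard] at h
    exact h.1 (by decide)
  rw [Int.card_Ico] at hle hpar
  obtain ⟨m, hm⟩ := hpar
  omega
end
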